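/- arXiv:1307.4394 — 2 statements merged into one kernel-verified Lean document; each statement's English description precedes it below -/
import Mathlib

section
/- Fix n ≥ 1, γ ∈ (0,1), α ∈ (0,1), and let 0 ≤ c_1 ≤ ⋯ ≤ c_n ≤ 1. For each i ∈ {1,…,n} define β(i) ∈ ℝ^n by β_l(i) = c_{k_i(l)} for l = 1, …, ⌊γn⌋+1 and β_l(i) = 0 for l > ⌊γn⌋+1. If Ã_{i·} · β(i) ≤ α for every i = 1, …, n, then for every probability space (Ω, P), every family of p-values PV_1, …, PV_n : Ω → [0,1] and every nonempty set I ⊆ {1,…,n} of true hypotheses with P(PV_i ≤ u) ≤ u for all i ∈ I and u ∈ (0,1), the step-down procedure with critical constants c satisfies P(FDP > γ) ≤ α. -/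
/-!
Let `i = |I|` and write `V(x)` for the number of true hypotheses with p-value at most `c x`.

If the false discovery proportion exceeds `γ` with `R = r`, then `V(r) > γ r`, so there is a smallest
`x ∈ {1, …, r}` with `V(x) > γ x`.  Put `l = ⌊γ x⌋ + 1`, so that `l ≤ V(x)`.  Minimality bounds the
true hypotheses below `c (x - 1)` by `γ (x - 1)`, while the step-down rule puts at least `x - 1`
p-values there; the surplus is made of false hypotheses, of which there are only `n - i`.  This gives
`x ≤ k_i(l)` and `l ≤ N(i)`, hence `l ≤ V(k_i(l))` (`exists_level_of_lt_FDPSD`).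

The probability that some level `l ≤ N(i)` is crossed in this way is controlled by a Markov
inequality (`measure_le_of_weighted_count`) for the weighted count `∑ l, w l * V(k_i(l))` with
`w l = Ã i l / i`.  The tails of `w` are `∑ l ≥ m, w l = 1 / m` (`sum_Icc_Atilde`), so the
weighted count is at least `1` as soon as one level is crossed, and its expectation is bounded by
the `i`-th row condition.
-/

open MeasureTheory

noncomputable section

namespace GenError

variable {Ω : Type*}

/-- The number of indices `i ∈ s` whose p-value at `ω` is at most `x`
(used to express order statistics: the `k`-th smallest of the `PV i`, `i ∈ s`,
is `≤ x` iff `k ≤ numLe s PV x ω`). -/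
def numLe (s : Finset ℕ) (PV : ℕ → Ω → ℝ) (x : ℝ) (ω : Ω) : ℕ :=
  (s.filter fun i => PV i ω ≤ x).card

/-- Number of rejections of the step-up procedure with critical constants `c` on
hypotheses `1, …, n`: `max {i : PV_(i) ≤ c i}` (and `0` if no such `i` exists). -/
def numRejSU (n : ℕ) (PV : ℕ → Ω → ℝ) (c : ℕ → ℝ) (ω : Ω) : ℕ :=
  ((Finset.Icc 1 n).filter fun i => i ≤ numLe (Finset.Icc 1 n) PV (c i) ω).sup id

open scoped Classical in
/-- Number of rejections of the step-down procedure with critical constants `c` on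
hypotheses `1, …, n`: `max {i : ∀ j ≤ i, PV_(j) ≤ c j}` (and `0` if `PV_(1) > c 1`). -/
def numRejSD (n : ℕ) (PV : ℕ → Ω → ℝ) (c : ℕ → ℝ) (ω : Ω) : ℕ :=
  ((Finset.Icc 1 n).filter fun i =>
      ∀ j ∈ Finset.Icc 1 i, j ≤ numLe (Finset.Icc 1 n) PV (c j) ω).sup id

/-- Number of rejected true hypotheses when `R` hypotheses are rejected by a stepwise
procedure with nondecreasing critical constants `c` (the rejected hypotheses, i.e. those
attaining the `R` smallest p-values, are exactly those with p-value `≤ c R`). -/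
def numFalse (PV : ℕ → Ω → ℝ) (c : ℕ → ℝ) (I : Finset ℕ) (R : ℕ) (ω : Ω) : ℕ :=
  if R = 0 then 0 else (I.filter fun i => PV i ω ≤ c R).card

/-- `V` for the step-up procedure. -/
def VSU (n : ℕ) (PV : ℕ → Ω → ℝ) (c : ℕ → ℝ) (I : Finset ℕ) (ω : Ω) : ℕ :=
  numFalse PV c I (numRejSU n PV c ω) ω

/-- `V` for the step-down procedure. -/
def VSD (n : ℕ) (PV : ℕ → Ω → ℝ) (c : ℕ → ℝ) (I : Finset ℕ) (ω : Ω) : ℕ :=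
  numFalse PV c I (numRejSD n PV c ω) ω

/-- False discovery proportion of the step-up procedure: `V/R` if `R > 0`, else `0`. -/
def FDPSU (n : ℕ) (PV : ℕ → Ω → ℝ) (c : ℕ → ℝ) (I : Finset ℕ) (ω : Ω) : ℝ :=
  if numRejSU n PV c ω = 0 then 0
  else (VSU n PV c I ω : ℝ) / (numRejSU n PV c ω : ℝ)

/-- False discovery proportion of the step-down procedure: `V/R` if `R > 0`, else `0`. -/
def FDPSD (n : ℕ) (PV : ℕ → Ω → ℝ) (c : ℕ → ℝ) (I : Finset ℕ) (ω : Ω) : ℝ :=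
  if numRejSD n PV c ω = 0 then 0
  else (VSD n PV c I ω : ℝ) / (numRejSD n PV c ω : ℝ)

/-- The matrix `A^{kFWER-SU}(k)` (rows/columns indexed by `1, …, n`). -/
def AkSU (n k i j : ℕ) : ℝ :=
  if i < k then 0
  else if j < n + k - i then 0
  else if j < n then (i : ℝ) * (1 / ((j + i - n : ℕ) : ℝ) - 1 / (((j + i - n : ℕ) : ℝ) + 1))
  else if j = n then 1
  else 0

/-- The matrix `A^{kFWER-SD}(k)` (rows/columns indexed by `1, …, n`). -/
def AkSD (n k i j : ℕ) : ℝ :=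
  if k ≤ i ∧ j = n - i + k then (i : ℝ) / (k : ℝ) else 0

/-- `m(j) = ⌊γ j⌋ + 1`. -/
def mfl (γ : ℝ) (j : ℕ) : ℕ := (⌊γ * (j : ℝ)⌋).toNat + 1

/-- `M̃(i) = max {l ∈ {1,…,n} : m(l) ≤ i}`. -/
def Mt (γ : ℝ) (n i : ℕ) : ℕ :=
  ((Finset.Icc 1 n).filter fun l => mfl γ l ≤ i).sup id

/-- `g_i(l) = max (i - n + l, m(l))`. -/
def gg (γ : ℝ) (n i l : ℕ) : ℕ := max (i + l - n) (mfl γ l)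

/-- `M(i) = g_i(M̃(i))`. -/
def MM (γ : ℝ) (n i : ℕ) : ℕ := gg γ n i (Mt γ n i)

/-- `t_k(i) = max {l ∈ {1,…,M̃(i)} : g_i(l) = k}`. -/
def tt (γ : ℝ) (n i k : ℕ) : ℕ :=
  ((Finset.Icc 1 (Mt γ n i)).filter fun l => gg γ n i l = k).sup id

/-- The matrix `A^{FDP-SU}(γ)`: the entry in column `j = t_k(i)` for `1 ≤ k < M(i)` is
`i (1/k - 1/(k+1))` (such a `k` necessarily equals `g_i(j)`), the entry in column
`j = t_{M(i)}(i)` is `i / M(i)`, and all other entries vanish. -/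
def AFDPSU (γ : ℝ) (n i j : ℕ) : ℝ :=
  if j = tt γ n i (MM γ n i) then (i : ℝ) / (MM γ n i : ℝ)
  else if 1 ≤ gg γ n i j ∧ gg γ n i j < MM γ n i ∧ j = tt γ n i (gg γ n i j) then
    (i : ℝ) * (1 / (gg γ n i j : ℝ) - 1 / ((gg γ n i j : ℝ) + 1))
  else 0

/-- `k_i(l) = min (n, n + l - i, ⌈l/γ⌉ - 1)`. -/
def kk (γ : ℝ) (n i l : ℕ) : ℕ :=
  min n (min (n + l - i) ((⌈(l : ℝ) / γ⌉).toNat - 1))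

/-- `N(i) = min (⌊γ n⌋ + 1, i, ⌊γ ((n - i)/(1 - γ) + 1)⌋ + 1)`. -/
def NN (γ : ℝ) (n i : ℕ) : ℕ :=
  min ((⌊γ * (n : ℝ)⌋).toNat + 1)
    (min i ((⌊γ * ((((n : ℝ) - (i : ℝ)) / (1 - γ)) + 1)⌋).toNat + 1))

/-- The matrix `Ã` for the step-down FDP bound. -/
def Atilde (γ : ℝ) (n i j : ℕ) : ℝ :=
  if 1 ≤ j ∧ j < NN γ n i then (i : ℝ) * (1 / (j : ℝ) - 1 / ((j : ℝ) + 1))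
  else if j = NN γ n i then (i : ℝ) / (NN γ n i : ℝ)
  else 0

/-- The matrix `A^{FDP-SD}(γ)`: `A i j = ∑_{l : k_i(l) = j} Ã i l` when `j` is in the image
`M(i)` of `k_i`, and `0` otherwise (the sum over the empty fibre being `0`). -/
def AFDPSD (γ : ℝ) (n i j : ℕ) : ℝ :=
  ∑ l ∈ (Finset.Icc 1 ((⌊γ * (n : ℝ)⌋).toNat + 1)).filter (fun l => kk γ n i l = j),
    Atilde γ n i l

/-- The vector `β(i)` built from constants `c` for the step-down FDP bound:
`β_l(i) = c (k_i(l))` for `1 ≤ l ≤ ⌊γ n⌋ + 1`, and `0` otherwise. -/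
def betaVec (γ : ℝ) (n i : ℕ) (c : ℕ → ℝ) (l : ℕ) : ℝ :=
  if 1 ≤ l ∧ l ≤ (⌊γ * (n : ℝ)⌋).toNat + 1 then c (kk γ n i l) else 0

/-- `β_l(i) = c (k_i(l))`, with the convention `β_0(i) = 0`. -/
def betaSD (γ : ℝ) (n i : ℕ) (c : ℕ → ℝ) (l : ℕ) : ℝ :=
  if l = 0 then 0 else c (kk γ n i l)

/-- `c (t_k(i))`, with the convention that the value at `k = 0` is `0`. -/
def cT (γ : ℝ) (n i : ℕ) (c : ℕ → ℝ) (k : ℕ) : ℝ :=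
  if k = 0 then 0 else c (tt γ n i k)

/-- The Lehmann–Romano constants `d^{LR}_j = k/(n + k - j)`. -/
def dLR (n k j : ℕ) : ℝ := (k : ℝ) / ((n + k - j : ℕ) : ℝ)

lemma kk_mem {γ : ℝ} (hγ : γ ∈ Set.Ioo (0 : ℝ) 1) {n i l : ℕ} (hi : i ≤ n) (hl : 1 ≤ l)
    (hn : 1 ≤ n) : kk γ n i l ∈ Set.Icc 1 n := by
  have h1 : (1 : ℝ) < (l : ℝ) / γ := by
    rw [lt_div_iff₀ hγ.1]
    have : (1 : ℝ) ≤ l := by exact_mod_cast hl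
    linarith [hγ.2]
  have h2 : (1 : ℤ) < ⌈(l : ℝ) / γ⌉ := by
    rw [Int.lt_ceil]; exact_mod_cast h1
  refine ⟨?_, min_le_left _ _⟩
  unfold kk
  omega

lemma kk_mono {γ : ℝ} (hγ : γ ∈ Set.Ioo (0 : ℝ) 1) {n i l m : ℕ} (h : l ≤ m) :
    kk γ n i l ≤ kk γ n i m := by
  have : ⌈(l : ℝ) / γ⌉ ≤ ⌈(m : ℝ) / γ⌉ := by
    apply Int.ceil_le_ceil
    have := hγ.1
    gcongr
  unfold kk
  omega

lemma sum_Ico_telescope {m N : ℕ} (h : m ≤ N) :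
    ∑ l ∈ Finset.Ico m N, (1 / (l : ℝ) - 1 / ((l : ℝ) + 1)) = 1 / (m : ℝ) - 1 / (N : ℝ) := by
  induction N, h using Nat.le_induction with
  | base => simp
  | succ k hk ih =>
    rw [Finset.sum_Ico_succ_top hk, ih]
    push_cast
    ring

/-- The tails of the `i`-th row of `Ã`, a telescoping sum: this is what makes `Ã i l / i` the right
weights for the Markov inequality. -/
lemma sum_Icc_Atilde {γ : ℝ} {n i m : ℕ} (hm : 1 ≤ m) (h : m ≤ NN γ n i) :
    ∑ l ∈ Finset.Icc m (NN γ n i), Atilde γ n i l = (i : ℝ) / m := by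
  rw [← Finset.Ico_insert_right h, Finset.sum_insert (by simp)]
  have h1 : ∀ l ∈ Finset.Ico m (NN γ n i),
      Atilde γ n i l = (i : ℝ) * (1 / (l : ℝ) - 1 / ((l : ℝ) + 1)) := by
    intro l hl
    rw [Finset.mem_Ico] at hl
    rw [Atilde, if_pos ⟨by omega, hl.2⟩]
  rw [Finset.sum_congr rfl h1, ← Finset.mul_sum, sum_Ico_telescope h]
  simp only [Atilde, lt_irrefl, and_false, if_false, if_true]
  ring

lemma Atilde_nonneg (γ : ℝ) (n i l : ℕ) : 0 ≤ Atilde γ n i l := by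
  unfold Atilde
  split_ifs with h h'
  · have : (1 : ℝ) ≤ l := by exact_mod_cast h.1
    have : 1 / ((l : ℝ) + 1) ≤ 1 / (l : ℝ) := by
      apply one_div_le_one_div_of_le <;> linarith
    exact mul_nonneg (Nat.cast_nonneg _) (by linarith)
  · positivity
  · exact le_rfl

lemma betaVec_mem {γ : ℝ} (hγ : γ ∈ Set.Ioo (0 : ℝ) 1) {n i : ℕ} (hn : 1 ≤ n) (hi : i ≤ n)
    {c : ℕ → ℝ} (hc1 : 0 ≤ c 1) (hcmono : MonotoneOn c (Set.Icc 1 n)) (hcn : c n ≤ 1) (l : ℕ) :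
    betaVec γ n i c l ∈ Set.Icc (0 : ℝ) 1 := by
  unfold betaVec
  split_ifs with h
  · have hk := kk_mem hγ hi h.1 hn
    exact ⟨hc1.trans (hcmono ⟨le_rfl, hn⟩ hk hk.1), (hcmono hk ⟨hn, le_rfl⟩ hk.2).trans hcn⟩
  · simp

/-- The hypothesis on null p-values extends from `u ∈ (0, 1)` to the closed interval. -/
lemma measure_le_of_mem_Icc {mΩ : MeasurableSpace Ω} (P : Measure Ω) [IsProbabilityMeasure P]
    {X : Ω → ℝ} (hX : ∀ u ∈ Set.Ioo (0 : ℝ) 1, P {ω | X ω ≤ u} ≤ ENNReal.ofReal u)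
    {u : ℝ} (hu : u ∈ Set.Icc (0 : ℝ) 1) : P {ω | X ω ≤ u} ≤ ENNReal.ofReal u := by
  rcases hu.2.eq_or_lt with rfl | h1
  · simpa using prob_le_one
  rcases hu.1.eq_or_lt with rfl | h0
  · have hlim : Filter.Tendsto ENNReal.ofReal (nhdsWithin 0 (Set.Ioi 0))
        (nhds (ENNReal.ofReal 0)) :=
      (ENNReal.continuous_ofReal.tendsto 0).mono_left nhdsWithin_le_nhds
    refine ge_of_tendsto hlim ?_
    filter_upwards [Ioo_mem_nhdsGT (zero_lt_one' ℝ)] with v hv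
    exact (measure_mono fun ω (hω : X ω ≤ 0) => hω.trans hv.1.le).trans (hX v hv)
  · exact hX u ⟨h0, h1⟩

open scoped Classical in
/-- Markov's inequality for a weighted count of events.  No measurability is assumed: the events
are replaced by measurable hulls, which have the same measure and only increase the count. -/
lemma measure_le_of_weighted_count {mΩ : MeasurableSpace Ω} (P : Measure Ω) (J S : Finset ℕ)
    (w b : ℕ → ℝ) (hw : ∀ l, 0 ≤ w l) (hb : ∀ l, 0 ≤ b l) (E : ℕ → ℕ → Set Ω)
    (hE : ∀ j ∈ J, ∀ l ∈ S, P (E j l) ≤ ENNReal.ofReal (b l)) (B : Set Ω)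
    (hB : ∀ ω ∈ B, 1 ≤ ∑ l ∈ S, w l * ((J.filter fun j => ω ∈ E j l).card : ℝ)) :
    P B ≤ ENNReal.ofReal (∑ l ∈ S, w l * (J.card * b l)) := by
  let g : Ω → ENNReal := fun ω => ∑ l ∈ S, ENNReal.ofReal (w l) *
    ∑ j ∈ J, (toMeasurable P (E j l)).indicator (fun _ => (1 : ENNReal)) ω
  have hind : ∀ j l, Measurable
      ((toMeasurable P (E j l)).indicator (fun _ => (1 : ENNReal))) := fun j l =>
    measurable_const.indicator (measurableSet_toMeasurable _ _)
  have hgm : Measurable g :=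
    Finset.measurable_sum _ fun l _ =>
      (Finset.measurable_sum _ fun j _ => hind j l).const_mul _
  have hsub : B ⊆ {ω | 1 ≤ g ω} := by
    intro ω hω
    have h1 := ENNReal.ofReal_le_ofReal (hB ω hω)
    rw [ENNReal.ofReal_one, ENNReal.ofReal_sum_of_nonneg
      fun l _ => mul_nonneg (hw l) (Nat.cast_nonneg _)] at h1
    refine h1.trans (Finset.sum_le_sum fun l _ => ?_)
    rw [ENNReal.ofReal_mul (hw l), ENNReal.ofReal_natCast, Finset.card_filter]
    push_cast
    gcongr with j hj
    split_ifs with h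
    · rw [Set.indicator_of_mem (subset_toMeasurable _ _ h)]
    · exact zero_le
  calc P B ≤ P {ω | 1 ≤ g ω} := measure_mono hsub
    _ ≤ ∫⁻ ω, g ω ∂P := by simpa using mul_meas_ge_le_lintegral hgm (μ := P) 1
    _ = ∑ l ∈ S, ENNReal.ofReal (w l) * ∑ j ∈ J, P (E j l) := by
      rw [lintegral_finsetSum _ fun l _ =>
        (Finset.measurable_sum _ fun j _ => hind j l).const_mul _]
      refine Finset.sum_congr rfl fun l _ => ?_
      rw [lintegral_const_mul _ (Finset.measurable_sum _ fun j _ => hind j l),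
        lintegral_finsetSum _ fun j _ => hind j l]
      congr 1
      refine Finset.sum_congr rfl fun j _ => ?_
      rw [lintegral_indicator_const (measurableSet_toMeasurable _ _), one_mul,
        measure_toMeasurable]
    _ ≤ ∑ l ∈ S, ENNReal.ofReal (w l) * ∑ _j ∈ J, ENNReal.ofReal (b l) := by
      gcongr with l hl j hj
      exact hE j hj l hl
    _ = ENNReal.ofReal (∑ l ∈ S, w l * (J.card * b l)) := by
      rw [ENNReal.ofReal_sum_of_nonneg fun l _ =>
        mul_nonneg (hw l) (mul_nonneg (Nat.cast_nonneg _) (hb l))]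
      refine Finset.sum_congr rfl fun l _ => ?_
      rw [ENNReal.ofReal_mul (hw l), ENNReal.ofReal_mul (Nat.cast_nonneg _),
        ENNReal.ofReal_natCast, Finset.sum_const, nsmul_eq_mul]

/-- A positive maximum over a filtered set is attained.  The decidability instance is an ordinary
implicit argument so that the lemma applies to the classical one in `numRejSD`. -/
lemma sup_filter_id_spec {p : ℕ → Prop} {inst : DecidablePred p} {S : Finset ℕ}
    (h : (S.filter p).sup id ≠ 0) : (S.filter p).sup id ∈ S ∧ p ((S.filter p).sup id) := by
  have hne : (S.filter p).Nonempty := by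
    rw [Finset.nonempty_iff_ne_empty]
    intro he
    exact h (by rw [he]; rfl)
  obtain ⟨a, ha, hae⟩ := Finset.exists_mem_eq_sup _ hne id
  rw [hae]
  exact Finset.mem_filter.1 ha

/-- The deterministic core: when the false discovery proportion of the step-down procedure exceeds
`γ`, at some level `l ≤ N(|I|)` at least `l` true p-values are at most `c (k_{|I|}(l))`. -/
lemma exists_level_of_lt_FDPSD {n : ℕ} {γ : ℝ} (hγ : γ ∈ Set.Ioo (0 : ℝ) 1) {c : ℕ → ℝ}
    (hcmono : MonotoneOn c (Set.Icc 1 n)) {PV : ℕ → Ω → ℝ} {I : Finset ℕ}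
    (hI : I ⊆ Finset.Icc 1 n) {ω : Ω} (h : γ < FDPSD n PV c I ω) :
    ∃ l, 1 ≤ l ∧ l ≤ NN γ n I.card ∧ l ≤ (I.filter fun j => PV j ω ≤ c (kk γ n I.card l)).card := by
  classical
  have hγ0 := hγ.1
  have hγ1 := hγ.2
  obtain ⟨r, hr⟩ : ∃ r, numRejSD n PV c ω = r := ⟨_, rfl⟩
  rw [FDPSD, VSD, hr] at h
  have hr0 : r ≠ 0 := by
    rintro rfl
    simp only [if_true] at h
    linarith
  have hrpos : (0 : ℝ) < r := by exact_mod_cast Nat.pos_of_ne_zero hr0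
  rw [if_neg hr0, numFalse, if_neg hr0, lt_div_iff₀ hrpos] at h
  obtain ⟨hrmem, hstep⟩ :=
    sup_filter_id_spec (show numRejSD n PV c ω ≠ 0 from hr ▸ hr0)
  change numRejSD n PV c ω ∈ _ at hrmem
  change ∀ j ∈ Finset.Icc 1 (numRejSD n PV c ω), _ at hstep
  rw [hr] at hrmem hstep
  obtain ⟨hr1, hrn⟩ := Finset.mem_Icc.1 hrmem
  let V : ℕ → ℕ := fun x => (I.filter fun j => PV j ω ≤ c x).card
  have hex : ∃ x, 1 ≤ x ∧ γ * x < V x := ⟨r, hr1, h⟩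
  obtain ⟨x, ⟨hx1, hxV⟩, hxmin⟩ :
      ∃ x, (1 ≤ x ∧ γ * x < V x) ∧ ∀ y < x, ¬ (1 ≤ y ∧ γ * y < V y) :=
    ⟨Nat.find hex, Nat.find_spec hex, fun y hy => Nat.find_min hex hy⟩
  have hxr : x ≤ r := by
    by_contra hlt
    exact hxmin r (by omega) ⟨hr1, h⟩
  have hIn : I.card ≤ n := by simpa using Finset.card_le_card hI
  have hVI : V x ≤ I.card := Finset.card_filter_le _ _
  -- By minimality few of the first `x - 1` p-values are true, so the false ones must fill up.
  have hfew : ∃ q : ℕ, (q : ℝ) ≤ γ * ((x : ℝ) - 1) ∧ x - 1 ≤ (n - I.card) + q := by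
    rcases hx1.eq_or_lt with rfl | hx2
    · exact ⟨0, by simp, by omega⟩
    · refine ⟨V (x - 1), ?_, ?_⟩
      · have h1 := hxmin (x - 1) (by omega)
        rw [not_and, not_lt] at h1
        have h2 := h1 (by omega)
        rwa [Nat.cast_sub hx1, Nat.cast_one] at h2
      · have h1 := hstep (x - 1) (Finset.mem_Icc.2 ⟨by omega, by omega⟩)
        refine h1.trans ?_
        have h2 : (Finset.Icc 1 n).filter (fun i => PV i ω ≤ c (x - 1)) ⊆
            (Finset.Icc 1 n \ I) ∪ I.filter fun j => PV j ω ≤ c (x - 1) := by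
          intro j hj
          simp only [Finset.mem_filter, Finset.mem_union, Finset.mem_sdiff] at hj ⊢
          tauto
        refine (Finset.card_le_card h2).trans ((Finset.card_union_le _ _).trans ?_)
        rw [Finset.card_sdiff_of_subset hI]
        simp [V]
  obtain ⟨q, hq1, hq2⟩ := hfew
  have hγx : 0 ≤ γ * (x : ℝ) := by positivity
  have hxn : (x : ℝ) ≤ n := by exact_mod_cast hxr.trans hrn
  obtain ⟨f, hf⟩ : ∃ f : ℕ, ⌊γ * (x : ℝ)⌋ = f :=
    ⟨_, (Int.toNat_of_nonneg (Int.floor_nonneg.2 hγx)).symm⟩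
  have hf1 : (f : ℝ) ≤ γ * x := by
    have := Int.floor_le (γ * (x : ℝ)); rw [hf] at this; exact_mod_cast this
  have hf2 : γ * x < (f : ℝ) + 1 := by
    have := Int.lt_floor_add_one (γ * (x : ℝ)); rw [hf] at this; exact_mod_cast this
  have hfV : f + 1 ≤ V x := by
    have : (f : ℝ) < V x := hf1.trans_lt hxV
    exact_mod_cast this
  have hqf : q ≤ f := by
    have : (q : ℝ) < (f : ℝ) + 1 := by nlinarith
    have : q < f + 1 := by exact_mod_cast this
    omega
  have hxk : x ≤ kk γ n I.card (f + 1) := by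
    have h1 : (x : ℤ) < ⌈((f + 1 : ℕ) : ℝ) / γ⌉ := by
      rw [Int.lt_ceil, lt_div_iff₀ hγ0]
      push_cast
      linarith
    unfold kk
    omega
  refine ⟨f + 1, by omega, ?_, ?_⟩
  · have h1 : (f : ℤ) ≤ ⌊γ * (n : ℝ)⌋ := by
      rw [← hf]
      exact Int.floor_le_floor (by gcongr)
    have h2 : (f : ℤ) ≤ ⌊γ * ((((n : ℝ) - (I.card : ℝ)) / (1 - γ)) + 1)⌋ := by
      rw [← hf]
      apply Int.floor_le_floor
      apply mul_le_mul_of_nonneg_left _ hγ0.le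
      have h3 : (x : ℝ) + I.card ≤ n + q + 1 := by
        have : x + I.card ≤ n + q + 1 := by omega
        exact_mod_cast this
      have h4 : (x : ℝ) - 1 ≤ ((n : ℝ) - (I.card : ℝ)) / (1 - γ) := by
        rw [le_div_iff₀ (by linarith)]
        linarith
      linarith
    unfold NN
    omega
  · refine hfV.trans (Finset.card_le_card ?_)
    have hk : kk γ n I.card (f + 1) ≤ n := min_le_left _ _
    have hc : c x ≤ c (kk γ n I.card (f + 1)) :=
      hcmono ⟨hx1, hxr.trans hrn⟩ ⟨hx1.trans hxk, hk⟩ hxk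
    intro j hj
    rw [Finset.mem_filter] at hj ⊢
    exact ⟨hj.1, hj.2.trans hc⟩

/-- sufficiency of the `Ã`-conditions for step-down FDP control. -/
theorem statement10 (n : ℕ) (hn : 1 ≤ n) (γ : ℝ) (hγ : γ ∈ Set.Ioo (0 : ℝ) 1)
    (α : ℝ) (hα : α ∈ Set.Ioo (0 : ℝ) 1)
    (c : ℕ → ℝ) (hc1 : 0 ≤ c 1) (hcmono : MonotoneOn c (Set.Icc 1 n)) (hcn : c n ≤ 1)
    (hrow : ∀ i ∈ Finset.Icc 1 n,
      ∑ l ∈ Finset.Icc 1 n, Atilde γ n i l * betaVec γ n i c l ≤ α) :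
    ∀ (Ω : Type) (mΩ : MeasurableSpace Ω) (P : Measure Ω), IsProbabilityMeasure P →
      ∀ PV : ℕ → Ω → ℝ, (∀ i ∈ Finset.Icc 1 n, ∀ ω, PV i ω ∈ Set.Icc (0 : ℝ) 1) →
      ∀ I : Finset ℕ, I ⊆ Finset.Icc 1 n → I.Nonempty →
      (∀ i ∈ I, ∀ u ∈ Set.Ioo (0 : ℝ) 1, P {ω | PV i ω ≤ u} ≤ ENNReal.ofReal u) →
      P {ω | γ < FDPSD n PV c I ω} ≤ ENNReal.ofReal α := by
  classical
  intro Ω mΩ P hP PV _ I hI hIne hnull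
  have hIn : I.card ≤ n := by simpa using Finset.card_le_card hI
  have hI1 : 1 ≤ I.card := hIne.card_pos
  have hI0 : (0 : ℝ) < I.card := by exact_mod_cast hI1
  have hβ := betaVec_mem hγ hn hIn hc1 hcmono hcn
  refine (measure_le_of_weighted_count P I (Finset.Icc 1 n)
    (fun l => Atilde γ n I.card l / I.card) (fun l => betaVec γ n I.card c l)
    (fun l => div_nonneg (Atilde_nonneg _ _ _ _) hI0.le) (fun l => (hβ l).1)
    (fun j l => {ω | PV j ω ≤ betaVec γ n I.card c l})
    (fun j hj l _ => measure_le_of_mem_Icc P (hnull j hj) (hβ l)) _ ?_).trans ?_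
  · intro ω hω
    obtain ⟨m, hm1, hmN, hm⟩ := exists_level_of_lt_FDPSD hγ hcmono hI hω
    have hNI : NN γ n I.card ≤ I.card := (min_le_right _ _).trans (min_le_left _ _)
    have hNf : NN γ n I.card ≤ (⌊γ * (n : ℝ)⌋).toNat + 1 := min_le_left _ _
    have hm0 : (0 : ℝ) < m := by exact_mod_cast hm1
    calc (1 : ℝ) = ∑ l ∈ Finset.Icc m (NN γ n I.card), Atilde γ n I.card l / I.card * m := by
          rw [← Finset.sum_mul, ← Finset.sum_div, sum_Icc_Atilde hm1 hmN]
          field_simp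
      _ ≤ ∑ l ∈ Finset.Icc m (NN γ n I.card), Atilde γ n I.card l / I.card *
            ((I.filter fun j => ω ∈ {ω | PV j ω ≤ betaVec γ n I.card c l}).card : ℝ) := by
          refine Finset.sum_le_sum fun l hl => ?_
          rw [Finset.mem_Icc] at hl
          refine mul_le_mul_of_nonneg_left ?_ (div_nonneg (Atilde_nonneg _ _ _ _) hI0.le)
          have hle : c (kk γ n I.card m) ≤ betaVec γ n I.card c l := by
            rw [betaVec, if_pos ⟨by omega, by omega⟩]
            exact hcmono (kk_mem hγ hIn hm1 hn) (kk_mem hγ hIn (by omega) hn) (kk_mono hγ hl.1)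
          have hcard : m ≤ (I.filter fun j =>
              ω ∈ {ω | PV j ω ≤ betaVec γ n I.card c l}).card := by
            refine hm.trans (Finset.card_le_card ?_)
            intro j hj
            rw [Finset.mem_filter] at hj ⊢
            exact ⟨hj.1, hj.2.trans hle⟩
          exact_mod_cast hcard
      _ ≤ _ := by
          refine Finset.sum_le_sum_of_subset_of_nonneg
            (Finset.Icc_subset_Icc hm1 (hNI.trans hIn)) fun l _ _ => ?_
          exact mul_nonneg (div_nonneg (Atilde_nonneg _ _ _ _) hI0.le) (Nat.cast_nonneg _)
  · refine ENNReal.ofReal_le_ofReal (le_trans (le_of_eq ?_)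
      (hrow I.card (Finset.mem_Icc.2 ⟨hI1, hIn⟩)))
    refine Finset.sum_congr rfl fun l _ => ?_
    field_simp

end GenError

end
end

section
/- Fix n ≥ 1, γ ∈ [0,1), α ∈ (0,1). Let c ∈ F(A^{FDP-SU}(γ)) and let ξ ∈ ℝ^n satisfy 0 ≤ ξ_1 ≤ ⋯ ≤ ξ_n, ξ_j ≥ c_j for all j, (A^{FDP-SU}(γ)·ξ)_i ≤ 1 for all i, and α·ξ_n ≤ 1. Then ξ ∈ F(A^{FDP-SU}(γ)); moreover, for every probability space (Ω, P), every family of p-values PV_1, …, PV_n : Ω → [0,1] and every nonempty set I ⊆ {1,…,n} of true hypotheses with P(PV_i ≤ u) ≤ u for all i ∈ I and u ∈ (0,1), the step-up procedure with critical constants α·ξ satisfies P(FDP > γ) ≤ α and rejects at least as many hypotheses as the step-up procedure with critical constants α·c. -/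
/-!
The argument is a Markov inequality for a weighted count of small true p-values.

Let `i = |I|` and suppose `FDP > γ` with `r` rejections. Then at least `m(r)` true hypotheses are
rejected, and at least `i - n + r` since only `n - i` hypotheses are false; hence at least `g_i(r)`
true p-values are at most `α ξ_r`. As `m(r) ≤ i`, also `r ≤ M̃(i)`, so with `k = g_i(r)` one has
`r ≤ t_k(i)` and `k ≤ M(i)`: at least `k` true p-values are at most `α ξ_{t_k(i)}`
(`exists_many_small`).

Put `w_k = 1/k - 1/(k+1)` for `k < M(i)` and `w_{M(i)} = 1/M(i)`, so that the tail sums telescope: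
`∑_{l ≥ k} w_l = 1/k`. Because `g_i` is nondecreasing, so is `k ↦ ξ_{t_k(i)}`, and on the event above
`∑_{j ∈ I} ∑_k w_k 1{PV_j ≤ α ξ_{t_k(i)}} ≥ k · (1/k) = 1`. Markov's inequality
(`measure_le_of_weighted_count`) bounds the probability of the event by
`∑_k i w_k α ξ_{t_k(i)}`. Since `g_i` starts at `1` and has steps at most `1`, each
`k ∈ {1, …, M(i)}` is attained, so the `t_k(i)` are distinct columns carrying the entries `i w_k`
of row `i` of the matrix (`sum_weight_le`), and the bound is at most `α (A ξ)_i ≤ α`.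

The p-values need not be measurable, so Markov's inequality is applied to measurable hulls of the
sets `{PV_j ≤ u}`.
-/


open MeasureTheory

noncomputable section

namespace GenError

variable {Ω : Type*}

/-! ### The functions `m` and `g_i` and the columns `t_k(i)` -/

lemma mfl_eq (γ : ℝ) (j : ℕ) : mfl γ j = ⌊γ * (j : ℝ)⌋₊ + 1 := by
  rw [mfl, Int.floor_toNat]

lemma mfl_mono {γ : ℝ} (h0 : 0 ≤ γ) : Monotone (mfl γ) := by
  intro a b hab
  rw [mfl_eq, mfl_eq]
  gcongr

lemma mfl_succ_le {γ : ℝ} (h0 : 0 ≤ γ) (h1 : γ < 1) (l : ℕ) : mfl γ (l + 1) ≤ mfl γ l + 1 := by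
  rw [mfl_eq, mfl_eq, ← Nat.floor_add_one (mul_nonneg h0 (Nat.cast_nonneg l))]
  refine Nat.add_le_add_right (Nat.floor_le_floor ?_) 1
  push_cast
  linarith

lemma mfl_one {γ : ℝ} (h1 : γ < 1) : mfl γ 1 = 1 := by
  rw [mfl_eq]
  simp [Nat.floor_eq_zero, h1]

lemma mfl_pos (γ : ℝ) (l : ℕ) : 1 ≤ mfl γ l := by
  rw [mfl_eq]; omega

lemma gg_mono {γ : ℝ} (h0 : 0 ≤ γ) (n i : ℕ) : Monotone (gg γ n i) := by
  intro a b hab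
  have := mfl_mono h0 hab
  simp only [gg]
  omega

lemma gg_pos (γ : ℝ) (n i l : ℕ) : 1 ≤ gg γ n i l :=
  (mfl_pos γ l).trans (le_max_right _ _)

/-- A discrete intermediate value theorem: `g_i` starts at `1` and has steps at most `1`. -/
lemma exists_gg_eq {γ : ℝ} (h0 : 0 ≤ γ) (h1 : γ < 1) {n i : ℕ} (hi : i ≤ n) {k : ℕ} (hk : 1 ≤ k) :
    ∀ L, 1 ≤ L → k ≤ gg γ n i L → ∃ l, 1 ≤ l ∧ l ≤ L ∧ gg γ n i l = k := by
  intro L hL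
  induction L, hL using Nat.le_induction with
  | base =>
    intro h
    refine ⟨1, le_rfl, le_rfl, ?_⟩
    simp only [gg, mfl_one h1] at h ⊢
    omega
  | succ L hL ih =>
    intro h
    by_cases hc : k ≤ gg γ n i L
    · obtain ⟨l, a, b, e⟩ := ih hc
      exact ⟨l, a, b.trans (Nat.le_succ L), e⟩
    · refine ⟨L + 1, by omega, le_rfl, ?_⟩
      have := mfl_succ_le h0 h1 L
      simp only [gg] at h hc ⊢
      omega

lemma le_Mt {γ : ℝ} {n i l : ℕ} (h1 : 1 ≤ l) (h2 : l ≤ n) (h : mfl γ l ≤ i) : l ≤ Mt γ n i :=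
  Finset.le_sup (f := id) (by simp [h1, h2, h])

lemma Mt_le (γ : ℝ) (n i : ℕ) : Mt γ n i ≤ n :=
  Finset.sup_le fun l hl => by
    simp only [Finset.mem_filter, Finset.mem_Icc] at hl
    exact hl.1.2

lemma le_tt {γ : ℝ} {n i l : ℕ} (h1 : 1 ≤ l) (h2 : l ≤ Mt γ n i) : l ≤ tt γ n i (gg γ n i l) :=
  Finset.le_sup (f := id) (by simp [h1, h2])

/-- The maximum defining `t_k(i)` is attained for every `k ∈ {1, …, M(i)}`. -/
lemma tt_spec {γ : ℝ} (h0 : 0 ≤ γ) (h1 : γ < 1) {n i : ℕ} (hi1 : 1 ≤ i) (hi : i ≤ n) {k : ℕ}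
    (hk : k ∈ Finset.Icc 1 (MM γ n i)) :
    tt γ n i k ∈ Finset.Icc 1 (Mt γ n i) ∧ gg γ n i (tt γ n i k) = k := by
  rw [Finset.mem_Icc] at hk
  have hMt : 1 ≤ Mt γ n i := le_Mt le_rfl (hi1.trans hi) (by rw [mfl_one h1]; exact hi1)
  obtain ⟨l, a, b, e⟩ := exists_gg_eq h0 h1 hi hk.1 _ hMt hk.2
  obtain ⟨x, hx, hx'⟩ := Finset.exists_mem_eq_sup
    ((Finset.Icc 1 (Mt γ n i)).filter fun l => gg γ n i l = k)
    ⟨l, by simp [a, b, e]⟩ id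
  have : tt γ n i k = x := hx'
  rw [this]
  simpa using hx

lemma tt_mono {γ : ℝ} (h0 : 0 ≤ γ) (h1 : γ < 1) {n i : ℕ} (hi1 : 1 ≤ i) (hi : i ≤ n) :
    MonotoneOn (tt γ n i) (Set.Icc 1 (MM γ n i)) := by
  intro k hk l hl hkl
  have a := (tt_spec h0 h1 hi1 hi (Finset.mem_Icc.2 hk)).2
  have b := (tt_spec h0 h1 hi1 hi (Finset.mem_Icc.2 hl)).2
  rcases hkl.eq_or_lt with rfl | h
  · exact le_rfl
  · by_contra! hc
    have := gg_mono h0 n i hc.le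
    omega

/-! ### The weights and the rows of the matrix -/

/-- The weights `w_k = 1/k - 1/(k+1)` for `k < M` and `w_M = 1/M`, whose tail sums are `1/k`. -/
def wt (M k : ℕ) : ℝ := if k = M then 1 / (M : ℝ) else 1 / (k : ℝ) - 1 / ((k : ℝ) + 1)

lemma wt_nonneg (M : ℕ) {k : ℕ} (hk : 1 ≤ k) : 0 ≤ wt M k := by
  unfold wt
  split_ifs
  · positivity
  · have : (0 : ℝ) < k := by exact_mod_cast hk
    rw [sub_nonneg]
    gcongr
    linarith

lemma sum_wt_tail {M K : ℕ} (hKM : K ≤ M) : ∑ k ∈ Finset.Icc K M, wt M k = 1 / (K : ℝ) := by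
  induction hKM using Nat.decreasingInduction with
  | self => simp [wt]
  | of_succ K hK ih =>
    have hK' : K < M := hK
    rw [← Finset.add_sum_Ioc_eq_sum_Icc hK'.le]
    have : Finset.Ioc K M = Finset.Icc (K + 1) M := by ext; simp
    rw [this, ih, wt, if_neg hK'.ne]
    push_cast
    ring

lemma AFDPSU_tt {γ : ℝ} (h0 : 0 ≤ γ) (h1 : γ < 1) {n i : ℕ} (hi1 : 1 ≤ i) (hi : i ≤ n) {k : ℕ}
    (hk : k ∈ Finset.Icc 1 (MM γ n i)) :
    AFDPSU γ n i (tt γ n i k) = i * wt (MM γ n i) k := by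
  have hg := (tt_spec h0 h1 hi1 hi hk).2
  have hk' := Finset.mem_Icc.1 hk
  by_cases hkM : k = MM γ n i
  · simp [AFDPSU, wt, ← hkM, div_eq_mul_inv]
  · have hM : MM γ n i ∈ Finset.Icc 1 (MM γ n i) := Finset.mem_Icc.2 ⟨by omega, le_rfl⟩
    have hgM := (tt_spec h0 h1 hi1 hi hM).2
    have hne : tt γ n i k ≠ tt γ n i (MM γ n i) := by
      intro h
      rw [h, hgM] at hg
      exact hkM hg.symm
    rw [AFDPSU, if_neg hne, hg, if_pos ⟨hk'.1, by omega, rfl⟩, wt, if_neg hkM]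

lemma AFDPSU_nonneg (γ : ℝ) (n i j : ℕ) : 0 ≤ AFDPSU γ n i j := by
  unfold AFDPSU
  split_ifs with h h'
  · positivity
  · have := wt_nonneg (MM γ n i) h'.1
    rw [wt, if_neg h'.2.1.ne] at this
    positivity
  · exact le_rfl

/-- The weighted sum over `k` is part of the `i`-th entry of `A ξ`: the columns `t_k(i)` are
pairwise distinct because `g_i(t_k(i)) = k`. -/
lemma sum_weight_le {γ : ℝ} (h0 : 0 ≤ γ) (h1 : γ < 1) {n i : ℕ} (hi1 : 1 ≤ i) (hi : i ≤ n)
    {ξ : ℕ → ℝ} (hξ : ∀ j ∈ Finset.Icc 1 n, 0 ≤ ξ j) :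
    ∑ k ∈ Finset.Icc 1 (MM γ n i), i * wt (MM γ n i) k * ξ (tt γ n i k) ≤
      ∑ j ∈ Finset.Icc 1 n, AFDPSU γ n i j * ξ j := by
  have hinj : Set.InjOn (tt γ n i) (Finset.Icc 1 (MM γ n i) : Finset ℕ) := by
    intro a ha b hb hab
    rw [← (tt_spec h0 h1 hi1 hi ha).2, ← (tt_spec h0 h1 hi1 hi hb).2, hab]
  calc _ = ∑ k ∈ Finset.Icc 1 (MM γ n i), AFDPSU γ n i (tt γ n i k) * ξ (tt γ n i k) :=
        Finset.sum_congr rfl fun k hk => by rw [AFDPSU_tt h0 h1 hi1 hi hk]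
    _ = ∑ j ∈ (Finset.Icc 1 (MM γ n i)).image (tt γ n i), AFDPSU γ n i j * ξ j :=
        (Finset.sum_image (f := fun j => AFDPSU γ n i j * ξ j) hinj).symm
    _ ≤ _ := by
        refine Finset.sum_le_sum_of_subset_of_nonneg ?_ fun j hj _ =>
          mul_nonneg (AFDPSU_nonneg _ _ _ _) (hξ j hj)
        intro j hj
        obtain ⟨k, hk, rfl⟩ := Finset.mem_image.1 hj
        have := Finset.mem_Icc.1 (tt_spec h0 h1 hi1 hi hk).1
        exact Finset.mem_Icc.2 ⟨this.1, this.2.trans (Mt_le _ _ _)⟩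

/-! ### The probability bound -/

/-- A uniform bound on the distribution function on `(0, 1)` extends to all `u ≥ 0`, by letting
`u ↓ 0` at the origin and trivially for `u ≥ 1`. -/
lemma measure_le_ofReal [MeasurableSpace Ω] (P : Measure Ω) [IsProbabilityMeasure P] {X : Ω → ℝ}
    (h : ∀ u ∈ Set.Ioo (0 : ℝ) 1, P {ω | X ω ≤ u} ≤ ENNReal.ofReal u) {u : ℝ} (hu : 0 ≤ u) :
    P {ω | X ω ≤ u} ≤ ENNReal.ofReal u := by
  rcases le_or_gt 1 u with h1 | h1
  · exact prob_le_one.trans (by simpa using ENNReal.ofReal_le_ofReal h1)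
  · rcases hu.eq_or_lt with rfl | h0
    · refine le_of_forall_gt_imp_ge_of_dense fun a ha => ?_
      rw [ENNReal.ofReal_zero] at ha
      obtain ⟨ε, hε, hε'⟩ := ENNReal.lt_iff_exists_nnreal_btwn.1 ha
      have hε0 : (0 : ℝ) < ε := by exact_mod_cast hε
      have hv : min (ε : ℝ) (1 / 2) ∈ Set.Ioo (0 : ℝ) 1 :=
        ⟨by positivity, (min_le_right _ _).trans_lt (by norm_num)⟩
      calc P {ω | X ω ≤ 0} ≤ P {ω | X ω ≤ min (ε : ℝ) (1 / 2)} :=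
            measure_mono fun ω (hω : X ω ≤ 0) => hω.trans hv.1.le
        _ ≤ ENNReal.ofReal (min (ε : ℝ) (1 / 2)) := h _ hv
        _ ≤ ENNReal.ofReal ε := ENNReal.ofReal_le_ofReal (min_le_left _ _)
        _ ≤ a := by simpa using hε'.le
    · exact h u ⟨h0, h1⟩

/-- If on `E`, for some `K`, at least `K` of the `X j` with `j ∈ I` are at most `β K`, where `β` is nonnegative and
nondecreasing, then `P E ≤ ∑ k, |I| w_k β_k`. This is Markov's inequality for
`∑ j ∈ I, ∑ k, w_k 1{X j ≤ β k}`, which is at least `K · (1/K)` on `E`. -/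
lemma measure_le_of_weighted_count_s16 [MeasurableSpace Ω] (P : Measure Ω) [IsProbabilityMeasure P]
    {I : Finset ℕ} {X : ℕ → Ω → ℝ}
    (h : ∀ i ∈ I, ∀ u ∈ Set.Ioo (0 : ℝ) 1, P {ω | X i ω ≤ u} ≤ ENNReal.ofReal u)
    {M : ℕ} {β : ℕ → ℝ} (hβ0 : ∀ k ∈ Finset.Icc 1 M, 0 ≤ β k) (hβ : MonotoneOn β (Set.Icc 1 M))
    {E : Set Ω}
    (hE : ∀ ω ∈ E, ∃ K ∈ Finset.Icc 1 M, K ≤ (I.filter fun i => X i ω ≤ β K).card) :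
    P E ≤ ENNReal.ofReal (∑ k ∈ Finset.Icc 1 M, I.card * wt M k * β k) := by
  let T : ℕ → ℕ → Set Ω := fun i k => toMeasurable P {ω | X i ω ≤ β k}
  have hT : ∀ i k, MeasurableSet (T i k) := fun i k => measurableSet_toMeasurable _ _
  let f : Ω → ENNReal := fun ω => ∑ i ∈ I, ∑ k ∈ Finset.Icc 1 M,
    (T i k).indicator (fun _ => ENNReal.ofReal (wt M k)) ω
  have hf : Measurable f := Finset.measurable_fun_sum _ fun i _ =>
    Finset.measurable_fun_sum _ fun k _ => measurable_const.indicator (hT i k)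
  have hEf : E ⊆ {ω | 1 ≤ f ω} := by
    intro ω hω
    obtain ⟨K, hK, hcard⟩ := hE ω hω
    rw [Finset.mem_Icc] at hK
    have hKpos : (0 : ℝ) < K := by exact_mod_cast hK.1
    have key : ∀ i ∈ I.filter fun i => X i ω ≤ β K, ENNReal.ofReal (1 / K) ≤
        ∑ k ∈ Finset.Icc 1 M, (T i k).indicator (fun _ => ENNReal.ofReal (wt M k)) ω := by
      intro i hi
      rw [Finset.mem_filter] at hi
      rw [← sum_wt_tail hK.2, ENNReal.ofReal_sum_of_nonneg fun k hk =>
        wt_nonneg M (hK.1.trans (Finset.mem_Icc.1 hk).1)]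
      calc _ = ∑ k ∈ Finset.Icc K M, (T i k).indicator (fun _ => ENNReal.ofReal (wt M k)) ω := by
            refine Finset.sum_congr rfl fun k hk => ?_
            rw [Finset.mem_Icc] at hk
            rw [Set.indicator_of_mem]
            exact subset_toMeasurable P _
              (hi.2.trans (hβ ⟨hK.1, hK.2⟩ ⟨hK.1.trans hk.1, hk.2⟩ hk.1))
        _ ≤ _ := Finset.sum_le_sum_of_subset (Finset.Icc_subset_Icc_left hK.1)
    calc (1 : ENNReal) = K * ENNReal.ofReal (1 / K) := by
          rw [← ENNReal.ofReal_natCast, ← ENNReal.ofReal_mul hKpos.le,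
            mul_one_div_cancel hKpos.ne', ENNReal.ofReal_one]
      _ ≤ ((I.filter fun i => X i ω ≤ β K).card : ENNReal) * ENNReal.ofReal (1 / K) := by
          gcongr
      _ = ∑ i ∈ I.filter fun i => X i ω ≤ β K, ENNReal.ofReal (1 / K) := by simp
      _ ≤ _ := Finset.sum_le_sum key
      _ ≤ f ω := Finset.sum_le_sum_of_subset (Finset.filter_subset _ _)
  calc P E ≤ P {ω | 1 ≤ f ω} := measure_mono hEf
    _ ≤ ∫⁻ ω, f ω ∂P := by simpa using mul_meas_ge_le_lintegral hf 1
    _ = ∑ i ∈ I, ∑ k ∈ Finset.Icc 1 M, ENNReal.ofReal (wt M k) * P {ω | X i ω ≤ β k} := by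
        rw [lintegral_finsetSum _ fun i _ =>
          Finset.measurable_fun_sum _ fun k _ => measurable_const.indicator (hT i k)]
        refine Finset.sum_congr rfl fun i _ => ?_
        rw [lintegral_finsetSum _ fun k _ => measurable_const.indicator (hT i k)]
        refine Finset.sum_congr rfl fun k _ => ?_
        rw [lintegral_indicator_const (hT i k), measure_toMeasurable]
    _ ≤ ∑ i ∈ I, ∑ k ∈ Finset.Icc 1 M, ENNReal.ofReal (wt M k) * ENNReal.ofReal (β k) := by
        refine Finset.sum_le_sum fun i hi => Finset.sum_le_sum fun k hk => ?_
        gcongr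
        exact measure_le_ofReal P (h i hi) (hβ0 k hk)
    _ = _ := by
        rw [Finset.sum_const, nsmul_eq_mul, ENNReal.ofReal_sum_of_nonneg, Finset.mul_sum]
        · refine Finset.sum_congr rfl fun k hk => ?_
          have hw := wt_nonneg M (Finset.mem_Icc.1 hk).1
          rw [mul_assoc, ENNReal.ofReal_mul (Nat.cast_nonneg _), ENNReal.ofReal_mul hw,
            ENNReal.ofReal_natCast]
        · intro k hk
          have hw := wt_nonneg M (Finset.mem_Icc.1 hk).1
          have := hβ0 k hk
          positivity

/-! ### The step-up procedure -/

lemma numRejSU_mono {n : ℕ} (PV : ℕ → Ω → ℝ) {c d : ℕ → ℝ}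
    (h : ∀ j ∈ Finset.Icc 1 n, c j ≤ d j) (ω : Ω) : numRejSU n PV c ω ≤ numRejSU n PV d ω := by
  refine Finset.sup_mono fun i hi => ?_
  rw [Finset.mem_filter] at hi ⊢
  refine ⟨hi.1, hi.2.trans (Finset.card_le_card fun j hj => ?_)⟩
  rw [Finset.mem_filter] at hj ⊢
  exact ⟨hj.1, hj.2.trans (h i hi.1)⟩

lemma numRejSU_spec {n : ℕ} (PV : ℕ → Ω → ℝ) (c : ℕ → ℝ) (ω : Ω) (h : numRejSU n PV c ω ≠ 0) :
    numRejSU n PV c ω ∈ Finset.Icc 1 n ∧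
      numRejSU n PV c ω ≤ numLe (Finset.Icc 1 n) PV (c (numRejSU n PV c ω)) ω := by
  set s := (Finset.Icc 1 n).filter fun i => i ≤ numLe (Finset.Icc 1 n) PV (c i) ω with hs
  have hR : numRejSU n PV c ω = s.sup id := rfl
  have hne : s.Nonempty := by
    rw [Finset.nonempty_iff_ne_empty]
    intro he
    rw [hR, he] at h
    exact h rfl
  obtain ⟨x, hx, hx'⟩ := Finset.exists_mem_eq_sup s hne id
  rw [hR, hx']
  exact Finset.mem_filter.1 hx

/-- If `FDP > γ`, then for some `k ≤ M(|I|)` at least `k` true p-values are at most the critical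
constant with index `t_k(|I|)`; the witness is `k = g_{|I|}(R)`. -/
lemma exists_many_small {γ : ℝ} (h0 : 0 ≤ γ) {n : ℕ} {PV : ℕ → Ω → ℝ} {d : ℕ → ℝ}
    (hd : MonotoneOn d (Set.Icc 1 n)) {I : Finset ℕ} (hI : I ⊆ Finset.Icc 1 n) {ω : Ω}
    (h : γ < FDPSU n PV d I ω) :
    ∃ k ∈ Finset.Icc 1 (MM γ n I.card),
      k ≤ (I.filter fun i => PV i ω ≤ d (tt γ n I.card k)).card := by
  unfold FDPSU at h
  split_ifs at h with hR0
  · exact absurd h h0.not_gt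
  obtain ⟨hRn, hR⟩ := numRejSU_spec PV d ω hR0
  rw [VSU, numFalse, if_neg hR0] at h
  set r := numRejSU n PV d ω
  have hr : 1 ≤ r ∧ r ≤ n := Finset.mem_Icc.1 hRn
  have hrpos : (0 : ℝ) < r := by exact_mod_cast hr.1
  rw [lt_div_iff₀ hrpos] at h
  set V := (I.filter fun i => PV i ω ≤ d r).card with hV
  have hmV : mfl γ r ≤ V := by
    rw [mfl_eq]
    exact (Nat.floor_lt (by positivity)).2 h
  have hVI : V ≤ I.card := Finset.card_filter_le _ _
  -- At most `n - |I|` of the rejected hypotheses are false.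
  have hcount : I.card + r ≤ V + n := by
    have h1 : numLe (Finset.Icc 1 n) PV (d r) ω ≤ V + (Finset.Icc 1 n \ I).card := by
      rw [numLe, hV]
      refine (Finset.card_le_card fun j hj => ?_).trans (Finset.card_union_le _ _)
      rw [Finset.mem_filter] at hj
      by_cases hjI : j ∈ I
      · exact Finset.mem_union_left _ (Finset.mem_filter.2 ⟨hjI, hj.2⟩)
      · exact Finset.mem_union_right _ (Finset.mem_sdiff.2 ⟨hj.1, hjI⟩)
    have h2 := Finset.card_sdiff_add_card_eq_card hI
    rw [Nat.card_Icc] at h2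
    omega
  have hgV : gg γ n I.card r ≤ V := max_le (by omega) hmV
  have hrM : r ≤ Mt γ n I.card := le_Mt hr.1 hr.2 (hmV.trans hVI)
  have hrt := le_tt (γ := γ) (n := n) (i := I.card) hr.1 hrM
  have htn : tt γ n I.card (gg γ n I.card r) ≤ n :=
    (Finset.sup_le fun l hl => (Finset.mem_Icc.1 (Finset.mem_filter.1 hl).1).2).trans
      (Mt_le γ n I.card)
  refine ⟨gg γ n I.card r, Finset.mem_Icc.2 ⟨gg_pos _ _ _ _, gg_mono h0 n _ hrM⟩,
    hgV.trans (Finset.card_le_card fun j hj => ?_)⟩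
  rw [Finset.mem_filter] at hj ⊢
  exact ⟨hj.1, hj.2.trans (hd hr ⟨hr.1.trans hrt, htn⟩ hrt)⟩

/-- a modified procedure `ξ ≥ c` remaining in `F(A^{FDP-SU}(γ))` controls
the FDP at level `α` and rejects at least as many hypotheses as `α · c`. -/
theorem statement16 (n : ℕ) (hn : 1 ≤ n) (γ : ℝ) (hγ : γ ∈ Set.Ico (0 : ℝ) 1)
    (α : ℝ) (hα : α ∈ Set.Ioo (0 : ℝ) 1)
    (c : ℕ → ℝ) (hc1 : 0 ≤ c 1) (hcmono : MonotoneOn c (Set.Icc 1 n))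
    (hcA : ∀ i ∈ Finset.Icc 1 n, ∑ j ∈ Finset.Icc 1 n, AFDPSU γ n i j * c j ≤ 1)
    (ξ : ℕ → ℝ) (hξ1 : 0 ≤ ξ 1) (hξmono : MonotoneOn ξ (Set.Icc 1 n))
    (hξc : ∀ j ∈ Finset.Icc 1 n, c j ≤ ξ j)
    (hξA : ∀ i ∈ Finset.Icc 1 n, ∑ j ∈ Finset.Icc 1 n, AFDPSU γ n i j * ξ j ≤ 1)
    (hξn : α * ξ n ≤ 1) :
    (0 ≤ ξ 1 ∧ MonotoneOn ξ (Set.Icc 1 n) ∧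
      ∀ i ∈ Finset.Icc 1 n, ∑ j ∈ Finset.Icc 1 n, AFDPSU γ n i j * ξ j ≤ 1) ∧
    ∀ (Ω : Type) (mΩ : MeasurableSpace Ω) (P : Measure Ω), IsProbabilityMeasure P →
      ∀ PV : ℕ → Ω → ℝ, (∀ i ∈ Finset.Icc 1 n, ∀ ω, PV i ω ∈ Set.Icc (0 : ℝ) 1) →
      ∀ I : Finset ℕ, I ⊆ Finset.Icc 1 n → I.Nonempty →
      (∀ i ∈ I, ∀ u ∈ Set.Ioo (0 : ℝ) 1, P {ω | PV i ω ≤ u} ≤ ENNReal.ofReal u) →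
        P {ω | γ < FDPSU n PV (fun j => α * ξ j) I ω} ≤ ENNReal.ofReal α ∧
        ∀ ω, numRejSU n PV (fun j => α * c j) ω ≤ numRejSU n PV (fun j => α * ξ j) ω := by
  refine ⟨⟨hξ1, hξmono, hξA⟩, fun Ω mΩ P hP PV _ I hI hIne hPV => ⟨?_, fun ω => ?_⟩⟩
  · have hi1 : 1 ≤ I.card := hIne.card_pos
    have hin : I.card ≤ n := by simpa using Finset.card_le_card hI
    have hξ0 : ∀ j ∈ Finset.Icc 1 n, 0 ≤ ξ j := fun j hj => by
      rw [Finset.mem_Icc] at hj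
      exact hξ1.trans (hξmono ⟨le_rfl, hn⟩ hj hj.1)
    have htn : ∀ k ∈ Finset.Icc 1 (MM γ n I.card), tt γ n I.card k ∈ Finset.Icc 1 n := fun k hk =>
      Finset.Icc_subset_Icc_right (Mt_le _ _ _) (tt_spec hγ.1 hγ.2 hi1 hin hk).1
    have hmono : MonotoneOn (fun j => α * ξ j) (Set.Icc 1 n) := fun a ha b hb hab =>
      mul_le_mul_of_nonneg_left (hξmono ha hb hab) hα.1.le
    refine (measure_le_of_weighted_count_s16 P hPV (M := MM γ n I.card)
      (β := fun k => α * ξ (tt γ n I.card k))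
      (fun k hk => mul_nonneg hα.1.le (hξ0 _ (htn k hk)))
      (fun k hk l hl hkl => hmono (Finset.mem_Icc.1 (htn k (Finset.mem_Icc.2 hk)))
        (Finset.mem_Icc.1 (htn l (Finset.mem_Icc.2 hl)))
        (tt_mono hγ.1 hγ.2 hi1 hin hk hl hkl))
      (fun ω hω => exists_many_small hγ.1 hmono hI hω)).trans ?_
    refine ENNReal.ofReal_le_ofReal ?_
    calc _ = α * ∑ k ∈ Finset.Icc 1 (MM γ n I.card),
          I.card * wt (MM γ n I.card) k * ξ (tt γ n I.card k) := by
          rw [Finset.mul_sum]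
          exact Finset.sum_congr rfl fun k _ => by ring
      _ ≤ α * 1 := mul_le_mul_of_nonneg_left
          ((sum_weight_le hγ.1 hγ.2 hi1 hin hξ0).trans
            (hξA _ (Finset.mem_Icc.2 ⟨hi1, hin⟩))) hα.1.le
      _ = α := mul_one α
  · exact numRejSU_mono PV (fun j hj => mul_le_mul_of_nonneg_left (hξc j hj) hα.1.le) ω

end GenError

end
end
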